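/- Let I be an instance with n ≥ 2 agents and n objects, let p = (p_1,...,p_n) be one of the three priority vectors in 𝕡, and let v be a valuation profile consistent with I. Assign to each edge e = (a_i, h_j) of G_I of rank r the weight w_e = p_r + v_i(h_j). Then every maximum-weight matching μ of G_I with respect to the weights (w_e) is a priority-p matching, and moreover SW(μ | v) ≥ SW(μ' | v) for every priority-p matching μ'; i.e., μ is a welfare-optimal priority-p matching. -/

import Mathlib

open Finset
open scoped Classical

/-- A one-sided matching instance with `n` agents and `n` objects.  Agent `i` has a
nonempty acceptable set `accept i` and a weak order `pref i` on it
(`pref i h h'` means agent `i` weakly prefers object `h` to object `h'`). -/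
structure OSMInstance (n : ℕ) where
  accept : Fin n → Finset (Fin n)
  accept_nonempty : ∀ i, (accept i).Nonempty
  pref : Fin n → Fin n → Fin n → Prop
  pref_refl : ∀ i h, h ∈ accept i → pref i h h
  pref_trans : ∀ i h₁ h₂ h₃, h₁ ∈ accept i → h₂ ∈ accept i → h₃ ∈ accept i →
    pref i h₁ h₂ → pref i h₂ h₃ → pref i h₁ h₃
  pref_total : ∀ i h₁ h₂, h₁ ∈ accept i → h₂ ∈ accept i → pref i h₁ h₂ ∨ pref i h₂ h₁

namespace OSMInstance

variable {n : ℕ}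

/-- Agent `i` strictly prefers object `h` to object `h'`. -/
def strictPref (I : OSMInstance n) (i h h' : Fin n) : Prop :=
  I.pref i h h' ∧ ¬ I.pref i h' h

/-- The rank of the edge `(i, h)` of `G_I`: one plus the number of acceptable objects
that agent `i` strictly prefers to `h`. -/
noncomputable def edgeRank (I : OSMInstance n) (e : Fin n × Fin n) : ℕ :=
  ((I.accept e.1).filter (fun h' => I.strictPref e.1 h' e.2)).card + 1

/-- A matching of `G_I`: a set of acceptable (agent, object) pairs in which every agent
and every object occurs at most once. -/
def IsMatching (I : OSMInstance n) (μ : Finset (Fin n × Fin n)) : Prop :=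
  (∀ e ∈ μ, e.2 ∈ I.accept e.1) ∧
  (∀ e ∈ μ, ∀ e' ∈ μ, e.1 = e'.1 → e = e') ∧
  (∀ e ∈ μ, ∀ e' ∈ μ, e.2 = e'.2 → e = e')

/-- Total weight of a set of edges under the edge weights `w`. -/
def weightSum (w : Fin n × Fin n → ℝ) (μ : Finset (Fin n × Fin n)) : ℝ :=
  ∑ e ∈ μ, w e

/-- Social welfare of the set of edges `μ` under the valuation profile `v`. -/
def SW (_I : OSMInstance n) (v : Fin n → Fin n → ℝ) (μ : Finset (Fin n × Fin n)) : ℝ :=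
  ∑ e ∈ μ, v e.1 e.2

/-- `μ` is a maximum-weight matching of `G_I` with respect to edge weights `w`. -/
def IsMaxWeightMatching (I : OSMInstance n) (w : Fin n × Fin n → ℝ)
    (μ : Finset (Fin n × Fin n)) : Prop :=
  I.IsMatching μ ∧ ∀ μ', I.IsMatching μ' → weightSum w μ' ≤ weightSum w μ

/-- `μ` is a priority-`p` matching: a maximum-weight matching when every rank-`r` edge
gets weight `p r`. -/
noncomputable def IsPriorityMatching (I : OSMInstance n) (p : ℕ → ℝ)
    (μ : Finset (Fin n × Fin n)) : Prop :=
  I.IsMaxWeightMatching (fun e => p (I.edgeRank e)) μ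

/-- `v` is a valuation profile consistent with the instance: values lie in `[0,1]`,
unacceptable objects have value `0`, and on acceptable objects the values represent
the weak order. -/
def Consistent (I : OSMInstance n) (v : Fin n → Fin n → ℝ) : Prop :=
  (∀ i h, 0 ≤ v i h ∧ v i h ≤ 1) ∧
  (∀ i h, h ∉ I.accept i → v i h = 0) ∧
  (∀ i h h', h ∈ I.accept i → h' ∈ I.accept i → (I.pref i h h' ↔ v i h' ≤ v i h))

/-- Unit-sum valuations: each agent's values over acceptable objects sum to `1`. -/
def UnitSum (I : OSMInstance n) (v : Fin n → Fin n → ℝ) : Prop :=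
  ∀ i, ∑ h ∈ I.accept i, v i h = 1

/-- Unit-range valuations: each agent values some acceptable object `1`, some
acceptable object `0`, and has two non-equivalent acceptable objects. -/
def UnitRange (I : OSMInstance n) (v : Fin n → Fin n → ℝ) : Prop :=
  ∀ i, (∃ h ∈ I.accept i, v i h = 1) ∧ (∃ h ∈ I.accept i, v i h = 0) ∧
    ∃ h ∈ I.accept i, ∃ h' ∈ I.accept i, I.strictPref i h h'

/-- Agent `i` is unmatched in `μ`. -/
def Unmatched (_I : OSMInstance n) (μ : Finset (Fin n × Fin n)) (i : Fin n) : Prop :=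
  ∀ h, (i, h) ∉ μ

/-- Agent `i` weakly prefers their allocation in `μ'` to their allocation in `μ`
(being unmatched is strictly worse than receiving any acceptable object). -/
def WeakImprove (I : OSMInstance n) (μ' μ : Finset (Fin n × Fin n)) (i : Fin n) : Prop :=
  I.Unmatched μ i ∨ ∃ h h', (i, h) ∈ μ ∧ (i, h') ∈ μ' ∧ I.pref i h' h

/-- Agent `i` strictly prefers their allocation in `μ'` to their allocation in `μ`. -/
def StrictImprove (I : OSMInstance n) (μ' μ : Finset (Fin n × Fin n)) (i : Fin n) : Prop :=
  (I.Unmatched μ i ∧ ∃ h', (i, h') ∈ μ') ∨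
    ∃ h h', (i, h) ∈ μ ∧ (i, h') ∈ μ' ∧ I.strictPref i h' h

/-- `μ` is a Pareto optimal matching of `G_I`. -/
def ParetoOptimal (I : OSMInstance n) (μ : Finset (Fin n × Fin n)) : Prop :=
  I.IsMatching μ ∧
    ¬ ∃ μ', I.IsMatching μ' ∧ (∀ i, I.WeakImprove μ' μ i) ∧ ∃ i, I.StrictImprove μ' μ i

/-- `sig I μ r` is the number of rank-`r` edges of `μ` (as an integer). -/
noncomputable def sig (I : OSMInstance n) (μ : Finset (Fin n × Fin n)) (r : ℕ) : ℤ :=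
  ((μ.filter (fun e => I.edgeRank e = r)).card : ℤ)

end OSMInstance

/-- Lexicographic comparison `f ≤ g` of the length-`len` tuples `(f 0, …, f (len-1))`
and `(g 0, …, g (len-1))`. -/
def LexLe (len : ℕ) (f g : ℕ → ℤ) : Prop :=
  (∀ j < len, f j = g j) ∨ ∃ j < len, (∀ i < j, f i = g i) ∧ f j < g j

namespace OSMInstance

variable {n : ℕ}

/-- `μ` is a rank-maximal matching: it lexicographically maximizes `(s_1, …, s_n)`. -/
noncomputable def RankMaximal (I : OSMInstance n) (μ : Finset (Fin n × Fin n)) : Prop :=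
  I.IsMatching μ ∧ ∀ μ', I.IsMatching μ' →
    LexLe n (fun j => I.sig μ' (j + 1)) (fun j => I.sig μ (j + 1))

/-- `μ` is a max-cardinality rank-maximal matching: it lexicographically maximizes
`(Σ_i s_i, s_1, …, s_n)`. -/
noncomputable def MaxCardRankMaximal (I : OSMInstance n) (μ : Finset (Fin n × Fin n)) : Prop :=
  I.IsMatching μ ∧ ∀ μ', I.IsMatching μ' →
    LexLe (n + 1) (fun j => if j = 0 then (μ'.card : ℤ) else I.sig μ' j)
      (fun j => if j = 0 then (μ.card : ℤ) else I.sig μ j)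

/-- `μ` is a fair matching: it lexicographically maximizes
`(Σ_i s_i, -s_n, -s_(n-1), …, -s_1)`. -/
noncomputable def FairMatching (I : OSMInstance n) (μ : Finset (Fin n × Fin n)) : Prop :=
  I.IsMatching μ ∧ ∀ μ', I.IsMatching μ' →
    LexLe (n + 1) (fun j => if j = 0 then (μ'.card : ℤ) else -I.sig μ' (n + 1 - j))
      (fun j => if j = 0 then (μ.card : ℤ) else -I.sig μ (n + 1 - j))

end OSMInstance

/-- The priority vector for rank-maximal matchings: a rank-`r` edge gets weight
`n ^ (2 * (n - r + 1))`. -/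
noncomputable def pRankMaximal (n : ℕ) : ℕ → ℝ :=
  fun r => (n : ℝ) ^ (2 * (n - r + 1))

/-- The priority vector for max-cardinality rank-maximal matchings: a rank-`r` edge gets
weight `n ^ (2 * n) + n ^ (2 * (n - r))`. -/
noncomputable def pMaxCardRankMaximal (n : ℕ) : ℕ → ℝ :=
  fun r => (n : ℝ) ^ (2 * n) + (n : ℝ) ^ (2 * (n - r))

/-- The priority vector for fair matchings: a rank-`r` edge gets weight
`4 * n ^ (2 * n) - 2 * n ^ (r - 1)`. -/
noncomputable def pFairVec (n : ℕ) : ℕ → ℝ :=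
  fun r => 4 * (n : ℝ) ^ (2 * n) - 2 * (n : ℝ) ^ (r - 1)

/-- The set `𝕡` of the three priority vectors of interest. -/
noncomputable def PrioritySet (n : ℕ) : Set (ℕ → ℝ) :=
  {pRankMaximal n, pMaxCardRankMaximal n, pFairVec n}

/-- The four matching properties considered: Pareto optimal, rank-maximal,
max-cardinality rank-maximal, and fair. -/
inductive MatchProp where
  | po | rm | mcrm | fair

/-- `μ` satisfies the property `X` with respect to the instance `I`. -/
noncomputable def SatisfiesProp {n : ℕ} (X : MatchProp) (I : OSMInstance n)
    (μ : Finset (Fin n × Fin n)) : Prop :=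
  match X with
  | .po => I.ParetoOptimal μ
  | .rm => I.RankMaximal μ
  | .mcrm => I.MaxCardRankMaximal μ
  | .fair => I.FairMatching μ

namespace OSMInstance

variable {n : ℕ}

lemma edgeRank_pos (I : OSMInstance n) (e : Fin n × Fin n) : 1 ≤ I.edgeRank e :=
  Nat.le_add_left 1 _

lemma edgeRank_le (I : OSMInstance n) (e : Fin n × Fin n) : I.edgeRank e ≤ n := by
  have h : ((I.accept e.1).filter (fun h' => I.strictPref e.1 h' e.2)).card
      < (univ : Finset (Fin n)).card := by
    refine card_lt_card ⟨subset_univ _, fun hsub => ?_⟩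
    have hmem := hsub (mem_univ e.2)
    exact (mem_filter.1 hmem).2.2 (mem_filter.1 hmem).2.1
  rw [card_fin] at h
  exact h

/-- An acceptable edge of the largest possible value has rank one. -/
lemma edgeRank_eq_one (I : OSMInstance n) {v : Fin n → Fin n → ℝ} (hv : I.Consistent v)
    {e : Fin n × Fin n} (he : e.2 ∈ I.accept e.1) (h1 : 1 ≤ v e.1 e.2) : I.edgeRank e = 1 := by
  unfold edgeRank
  rw [Nat.add_eq_right, card_eq_zero, filter_eq_empty_iff]
  intro h' hh' hpref
  exact hpref.2 ((hv.2.2 _ _ _ he hh').2 (((hv.1 e.1 h').2).trans h1))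

lemma IsMatching.card_le {I : OSMInstance n} {μ : Finset (Fin n × Fin n)}
    (hμ : I.IsMatching μ) : μ.card ≤ n := by
  have h := card_le_card_of_injOn (s := μ) (t := (univ : Finset (Fin n))) Prod.fst
    (fun _ _ => mem_coe.2 (mem_univ _)) (fun e he e' he' h => hμ.2.1 e he e' he' h)
  rwa [card_fin] at h

/-- A matching of welfare `n` has maximum priority weight, as all its edges have rank one. -/
lemma SW_lt_of_weightSum_lt (I : OSMInstance n) {p : ℕ → ℝ} (hp0 : 0 ≤ p 1)
    (hp1 : ∀ r, 1 ≤ r → p r ≤ p 1) {v : Fin n → Fin n → ℝ} (hv : I.Consistent v)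
    {μ μ' : Finset (Fin n × Fin n)} (hμ : I.IsMatching μ) (hμ' : I.IsMatching μ')
    (h : weightSum (fun e => p (I.edgeRank e)) μ < weightSum (fun e => p (I.edgeRank e)) μ') :
    I.SW v μ < n := by
  by_contra! hSW
  have hcard : (μ.card : ℝ) ≤ n := by exact_mod_cast hμ.card_le
  have hcard' : (μ'.card : ℝ) ≤ n := by exact_mod_cast hμ'.card_le
  have hle : ∀ e ∈ μ, v e.1 e.2 ≤ 1 := fun e _ => (hv.1 _ _).2
  have hone : ∀ e ∈ μ, 1 ≤ v e.1 e.2 := by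
    by_contra! hlt
    have := sum_lt_sum hle hlt
    simp only [sum_const, nsmul_eq_mul, mul_one] at this
    unfold SW at hSW
    linarith
  have hn : (n : ℝ) ≤ μ.card := by
    have := sum_le_sum hle
    simp only [sum_const, nsmul_eq_mul, mul_one] at this
    exact hSW.trans this
  have hP : weightSum (fun e => p (I.edgeRank e)) μ = μ.card * p 1 := by
    unfold weightSum
    rw [← nsmul_eq_mul, ← sum_const]
    refine sum_congr rfl fun e he => ?_
    simp only [I.edgeRank_eq_one hv (hμ.1 e he) (hone e he)]
  have hP' : weightSum (fun e => p (I.edgeRank e)) μ' ≤ μ'.card * p 1 := by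
    unfold weightSum
    rw [← nsmul_eq_mul, ← sum_const]
    exact sum_le_sum fun e _ => hp1 _ (I.edgeRank_pos e)
  have := mul_le_mul_of_nonneg_right (hcard'.trans hn) hp0
  linarith

end OSMInstance

/-- If weights are a large constant `A` plus small multiples of `m`, distinct total weights
of sets of at most `n` elements differ by at least `n`. -/
lemma le_sum_sub_sum_of_dvd {α : Type*} {n : ℕ} {A K m : ℤ} {c : α → ℤ}
    (hc0 : ∀ e, 0 ≤ c e) (hcK : ∀ e, c e ≤ K) (hdvd : ∀ e, m ∣ c e) (hK : 0 ≤ K)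
    (hA : n * K + n ≤ A) (hm : n ≤ m) {s t : Finset α} (hs : s.card ≤ n) (ht : t.card ≤ n)
    (h : ∑ e ∈ s, (A + c e) < ∑ e ∈ t, (A + c e)) :
    (n : ℤ) ≤ ∑ e ∈ t, (A + c e) - ∑ e ∈ s, (A + c e) := by
  have hub : ∀ u : Finset α, u.card ≤ n → ∑ e ∈ u, c e ≤ n * K := fun u hu => by
    calc ∑ e ∈ u, c e ≤ u.card * K := by
          rw [← nsmul_eq_mul, ← sum_const]
          exact sum_le_sum fun e _ => hcK e
      _ ≤ n * K := mul_le_mul_of_nonneg_right (by exact_mod_cast hu) hK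
  have hs0 : 0 ≤ ∑ e ∈ s, c e := sum_nonneg fun e _ => hc0 e
  have ht0 : 0 ≤ ∑ e ∈ t, c e := sum_nonneg fun e _ => hc0 e
  have hsu := hub s hs
  have htu := hub t ht
  have hApos : 0 ≤ A := by nlinarith
  simp only [sum_add_distrib, sum_const, nsmul_eq_mul] at h ⊢
  rcases lt_trichotomy s.card t.card with hlt | heq | hgt
  · have : (s.card : ℤ) + 1 ≤ t.card := by exact_mod_cast hlt
    nlinarith
  · rw [heq] at h ⊢
    have hd : m ∣ ∑ e ∈ t, c e - ∑ e ∈ s, c e :=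
      dvd_sub (dvd_sum fun e _ => hdvd e) (dvd_sum fun e _ => hdvd e)
    have := Int.le_of_dvd (by linarith) hd
    linarith
  · have : (t.card : ℤ) + 1 ≤ s.card := by exact_mod_cast hgt
    nlinarith

lemma apply_le_apply_one_of_mem_prioritySet {n : ℕ} (hn : 2 ≤ n) {p : ℕ → ℝ}
    (hp : p ∈ PrioritySet n) :
    0 ≤ p 1 ∧ ∀ r, 1 ≤ r → p r ≤ p 1 := by
  have hn1 : (1 : ℝ) ≤ n := by exact_mod_cast (by omega : 1 ≤ n)
  rcases hp with rfl | rfl | rfl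
  · refine ⟨by unfold pRankMaximal; positivity, fun r hr => ?_⟩
    exact pow_le_pow_right₀ hn1 (by omega)
  · refine ⟨by unfold pMaxCardRankMaximal; positivity, fun r hr => ?_⟩
    have := pow_le_pow_right₀ hn1 (by omega : 2 * (n - r) ≤ 2 * (n - 1))
    unfold pMaxCardRankMaximal
    linarith
  · have hpow := one_le_pow₀ hn1 (n := 2 * n)
    refine ⟨by simp only [pFairVec, tsub_self, pow_zero]; linarith, fun r hr => ?_⟩
    have := one_le_pow₀ hn1 (n := r - 1)
    simp only [pFairVec, tsub_self, pow_zero]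
    linarith

lemma mul_add_le_sq_mul {a b : ℤ} (ha : 2 ≤ a) (hab : a ≤ b) : a * b + a ≤ a ^ 2 * b := by
  have h₁ : 0 ≤ (a - 2) * (a * b) := mul_nonneg (by linarith) (by nlinarith)
  have h₂ : b ≤ a * b := le_mul_of_one_le_left (by linarith) (by linarith)
  linarith

/-- Distinct priority weights of matchings differ by at least `n`. -/
lemma OSMInstance.le_weightSum_sub_weightSum {n : ℕ} (hn : 2 ≤ n) (I : OSMInstance n)
    {p : ℕ → ℝ} (hp : p ∈ PrioritySet n) {μ μ' : Finset (Fin n × Fin n)}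
    (hμ : I.IsMatching μ) (hμ' : I.IsMatching μ')
    (h : weightSum (fun e => p (I.edgeRank e)) μ < weightSum (fun e => p (I.edgeRank e)) μ') :
    (n : ℝ) ≤ weightSum (fun e => p (I.edgeRank e)) μ'
      - weightSum (fun e => p (I.edgeRank e)) μ := by
  have hn2 : (2 : ℤ) ≤ n := by exact_mod_cast hn
  have hn1 : (1 : ℤ) ≤ n := by omega
  have key : ∀ q : Fin n × Fin n → ℤ, (∀ e, p (I.edgeRank e) = q e) →
      (∑ e ∈ μ, q e < ∑ e ∈ μ', q e → (n : ℤ) ≤ ∑ e ∈ μ', q e - ∑ e ∈ μ, q e) →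
      (n : ℝ) ≤ weightSum (fun e => p (I.edgeRank e)) μ'
        - weightSum (fun e => p (I.edgeRank e)) μ := by
    intro q hq hgap
    simp only [weightSum, hq] at h ⊢
    exact_mod_cast hgap (by exact_mod_cast h)
  rcases hp with rfl | rfl | rfl
  · refine key (fun e => (n : ℤ) ^ (2 * (n - I.edgeRank e + 1)))
      (fun e => by simp [pRankMaximal]) fun hlt => ?_
    have hd : ∀ s : Finset (Fin n × Fin n),
        (n : ℤ) ∣ ∑ e ∈ s, (n : ℤ) ^ (2 * (n - I.edgeRank e + 1)) :=
      fun s => dvd_sum fun e _ => dvd_pow_self _ (by omega)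
    exact Int.le_of_dvd (by linarith) (dvd_sub (hd _) (hd _))
  · refine key (fun e => ((n : ℤ) ^ (2 * n) + 1) + ((n : ℤ) ^ (2 * (n - I.edgeRank e)) - 1))
      (fun e => by simp [pMaxCardRankMaximal]) fun hlt => ?_
    refine le_sum_sub_sum_of_dvd (K := (n : ℤ) ^ (2 * (n - 1))) (m := (n : ℤ) ^ 2 - 1)
      (fun e => ?_) (fun e => ?_) (fun e => ?_) (by positivity) ?_ (by nlinarith)
      hμ.card_le hμ'.card_le hlt
    · linarith [one_le_pow₀ hn1 (n := 2 * (n - I.edgeRank e))]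
    · have := I.edgeRank_pos e
      linarith [pow_le_pow_right₀ hn1 (by omega : 2 * (n - I.edgeRank e) ≤ 2 * (n - 1))]
    · rw [pow_mul]
      exact sub_one_dvd_pow_sub_one _ _
    · have hsq : (n : ℤ) ^ (2 * n) = (n : ℤ) ^ 2 * (n : ℤ) ^ (2 * (n - 1)) := by
        rw [← pow_add]
        congr 1
        omega
      have := le_self_pow₀ hn1 (by omega : 2 * (n - 1) ≠ 0)
      rw [hsq]
      linarith [mul_add_le_sq_mul hn2 this]
  · refine key (fun e => (4 * (n : ℤ) ^ (2 * n) - 2 * (n : ℤ) ^ (n - 1))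
        + (2 * (n : ℤ) ^ (n - 1) - 2 * (n : ℤ) ^ (I.edgeRank e - 1)))
      (fun e => by simp [pFairVec]) fun hlt => ?_
    refine le_sum_sub_sum_of_dvd (K := 2 * (n : ℤ) ^ (n - 1)) (m := 2 * ((n : ℤ) - 1))
      (fun e => ?_) (fun e => ?_) (fun e => ?_) (by positivity) ?_ (by linarith)
      hμ.card_le hμ'.card_le hlt
    · have := I.edgeRank_le e
      linarith [pow_le_pow_right₀ hn1 (by omega : I.edgeRank e - 1 ≤ n - 1)]
    · linarith [pow_nonneg (zero_le_one.trans hn1) (I.edgeRank e - 1)]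
    · rw [← mul_sub]
      refine mul_dvd_mul_left 2 ?_
      have := dvd_sub (sub_one_dvd_pow_sub_one (n : ℤ) (n - 1))
        (sub_one_dvd_pow_sub_one (n : ℤ) (I.edgeRank e - 1))
      simpa using this
    · have hsq : (n : ℤ) ^ (2 * n) = (n : ℤ) ^ 2 * ((n : ℤ) ^ (n - 1)) ^ 2 := by
        rw [← pow_mul, ← pow_add]
        congr 1
        omega
      have := le_self_pow₀ hn1 (by omega : n - 1 ≠ 0)
      rw [hsq]
      generalize (n : ℤ) ^ (n - 1) = X at this ⊢
      generalize (n : ℤ) = N at *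
      have hX : N ^ 2 * X ≤ N ^ 2 * X ^ 2 :=
        mul_le_mul_of_nonneg_left (le_self_pow₀ (hn1.trans this) two_ne_zero) (sq_nonneg N)
      have hNX : X ≤ N * X := le_mul_of_one_le_left (by linarith) hn1
      linarith [mul_add_le_sq_mul hn2 this]

/-- every maximum-weight matching for the weights `p_r + v_i(h_j)` is a
welfare-optimal priority-`p` matching, for `p ∈ 𝕡`. -/
theorem maxWeight_is_welfareOptimal_priority {n : ℕ} (hn : 2 ≤ n) (I : OSMInstance n)
    (p : ℕ → ℝ) (hp : p ∈ PrioritySet n)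
    (v : Fin n → Fin n → ℝ) (hv : I.Consistent v)
    (μ : Finset (Fin n × Fin n))
    (hμ : I.IsMaxWeightMatching (fun e => p (I.edgeRank e) + v e.1 e.2) μ) :
    I.IsPriorityMatching p μ ∧
      ∀ μ' : Finset (Fin n × Fin n), I.IsPriorityMatching p μ' →
        I.SW v μ' ≤ I.SW v μ := by
  have hgap : ∀ μ', I.IsMatching μ' →
      OSMInstance.weightSum (fun e => p (I.edgeRank e)) μ' + I.SW v μ' ≤
        OSMInstance.weightSum (fun e => p (I.edgeRank e)) μ + I.SW v μ := by
    intro μ' hμ'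
    have := hμ.2 μ' hμ'
    simpa only [OSMInstance.weightSum, OSMInstance.SW, sum_add_distrib] using this
  refine ⟨⟨hμ.1, fun μ' hμ' => ?_⟩, fun μ' hμ' => ?_⟩
  · by_contra! hlt
    obtain ⟨hp0, hp1⟩ := apply_le_apply_one_of_mem_prioritySet hn hp
    have hSW := I.SW_lt_of_weightSum_lt hp0 hp1 hv hμ.1 hμ' hlt
    have hSW' : 0 ≤ I.SW v μ' := sum_nonneg fun e _ => (hv.1 _ _).1
    have := I.le_weightSum_sub_weightSum hn hp hμ.1 hμ' hlt
    linarith [hgap μ' hμ']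
  · linarith [hgap μ' hμ'.1, hμ'.2 μ hμ.1]
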